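/- Let n, m be finite types, let N ∈ ℕ, and for each j ∈ Fin N let Λ_j, Γ_j, Φ_j : Matrix n n ℂ →ₗ[ℂ] Matrix n n ℂ satisfy Λ_j = (1+r_j) • Γ_j - r_j • Φ_j with r_j ≥ 0 and Γ_j, Φ_j completely positive and trace-preserving. Let p_j ≥ 0 (j ∈ Fin N), let Ψ ∈ Matrix (m × n) (m × n) ℂ be a density matrix, and let (M_j)_{j ∈ Fin (N+1)} be positive semidefinite matrices with Σ_j M_j = 1 (a POVM with a possible inconclusive outcome M_N). Then the average channel-discrimination success probability satisfies Σ_{j ∈ Fin N} p_j · Re Tr((id_m ⊗ Λ_j)(Ψ) · M_j) ≤ (1 + max_{j ∈ Fin N} r_j) · Σ_{j ∈ Fin N} p_j · Re Tr((id_m ⊗ Γ_j)(Ψ) · M_j), provided N ≥ 1. -/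

import Mathlib

open Matrix
open scoped ComplexOrder

open scoped MatrixOrder in
/-- The trace norm of a matrix: the trace of the positive semidefinite square root of `AᴴA`. -/
noncomputable def traceNorm {n : Type*} [Fintype n] [DecidableEq n] (A : Matrix n n ℂ) : ℝ :=
  ((CFC.sqrt (Aᴴ * A)).trace).re

/-- The blockwise application `id_m ⊗ Φ` of a linear map `Φ` on `Matrix n n ℂ`:
`((id_m ⊗ Φ)(Δ))((i,k),(j,l)) = (Φ(Δ_{i,j}))(k,l)` where `Δ_{i,j}(k,l) = Δ((i,k),(j,l))`
is the `(i,j)` block of `Δ`. -/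
def idTensor (m : Type*) [Fintype m] {n : Type*} [Fintype n]
    (Φ : Matrix n n ℂ →ₗ[ℂ] Matrix n n ℂ) :
    Matrix (m × n) (m × n) ℂ →ₗ[ℂ] Matrix (m × n) (m × n) ℂ where
  toFun Δ := Matrix.of fun p q =>
    (Φ (Matrix.of fun k l => Δ (p.1, k) (q.1, l))) p.2 q.2
  map_add' Δ Δ' := by
    have h : ∀ i j : m, (Matrix.of fun k l => (Δ + Δ') (i, k) (j, l))
        = (Matrix.of fun k l => Δ (i, k) (j, l))
          + (Matrix.of fun k l => Δ' (i, k) (j, l)) := by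
      intro i j; ext k l; simp [Matrix.add_apply]
    ext ⟨i, k⟩ ⟨j, l⟩
    simp only [Matrix.of_apply, Matrix.add_apply]
    rw [← Matrix.add_apply, ← map_add, ← h]
    rfl
  map_smul' c Δ := by
    have h : ∀ i j : m, (Matrix.of fun k l => (c • Δ) (i, k) (j, l))
        = c • (Matrix.of fun k l => Δ (i, k) (j, l)) := by
      intro i j; ext k l; simp [Matrix.smul_apply]
    ext ⟨i, k⟩ ⟨j, l⟩
    simp only [Matrix.of_apply, Matrix.smul_apply, RingHom.id_apply]
    rw [← Matrix.smul_apply, ← LinearMap.map_smul, ← h]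
    rfl

/-- Complete positivity: `id_m ⊗ Φ` maps positive semidefinite matrices to positive
semidefinite matrices for every finite type `m`. -/
def IsCompletelyPositive {n : Type*} [Fintype n]
    (Φ : Matrix n n ℂ →ₗ[ℂ] Matrix n n ℂ) : Prop :=
  ∀ (m : Type) (_ : Fintype m) (Δ : Matrix (m × n) (m × n) ℂ),
    Δ.PosSemidef → (idTensor m Φ Δ).PosSemidef

/-- Trace preservation. -/
def IsTracePreserving {n : Type*} [Fintype n]
    (Φ : Matrix n n ℂ →ₗ[ℂ] Matrix n n ℂ) : Prop :=
  ∀ X : Matrix n n ℂ, (Φ X).trace = X.trace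

/-- A density matrix: positive semidefinite with unit trace. -/
def IsDensityMatrix {N : Type*} [Fintype N] (ρ : Matrix N N ℂ) : Prop :=
  ρ.PosSemidef ∧ ρ.trace = 1

/-!
For positive semidefinite `Ψ` and `M`, the functional `Θ ↦ Tr((id ⊗ Θ)(Ψ) M)` is nonnegative on
completely positive maps, hence monotone for the order they define. With `R = max_j r_j`, the
map `(1 + R) Γ_j - Λ_j = (R - r_j) Γ_j + r_j Φ_j` is completely positive, so passing
from `Γ_j` to `Λ_j` increases each term of the success probability by a factor of at most `1 + R`.
-/

open scoped MatrixOrder in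
theorem trace_mul_nonneg_of_posSemidef {ι 𝕜 : Type*} [Fintype ι] [RCLike 𝕜]
    {A B : Matrix ι ι 𝕜} (hA : A.PosSemidef) (hB : B.PosSemidef) : 0 ≤ (A * B).trace := by
  classical
  obtain ⟨C, rfl⟩ := CStarAlgebra.nonneg_iff_eq_star_mul_self.mp hB.nonneg
  calc 0 ≤ (C * A * Cᴴ).trace := (hA.mul_mul_conjTranspose_same C).trace_nonneg
    _ = (A * (star C * C)).trace := by
      rw [star_eq_conjTranspose, Matrix.mul_assoc, trace_mul_comm, Matrix.mul_assoc]

section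

variable {n m : Type*} [Fintype n] [Fintype m] {Φ Θ Λ Γ : Matrix n n ℂ →ₗ[ℂ] Matrix n n ℂ}

theorem idTensor_add : idTensor m (Φ + Θ) = idTensor m Φ + idTensor m Θ :=
  rfl

theorem idTensor_sub : idTensor m (Φ - Θ) = idTensor m Φ - idTensor m Θ :=
  rfl

theorem idTensor_smul (c : ℂ) : idTensor m (c • Φ) = c • idTensor m Φ :=
  rfl

theorem idTensor_submatrix {m' : Type*} [Fintype m'] (f g : m' → m)
    (Δ : Matrix (m × n) (m × n) ℂ) :
    idTensor m' Φ (Δ.submatrix (Prod.map f id) (Prod.map g id)) =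
      (idTensor m Φ Δ).submatrix (Prod.map f id) (Prod.map g id) :=
  rfl

namespace IsCompletelyPositive

/- The definition only quantifies over ancillas in `Type`; other universes are reached by
transport to `Fin (card m)`. -/
theorem posSemidef_idTensor (hΦ : IsCompletelyPositive Φ) {Δ : Matrix (m × n) (m × n) ℂ}
    (hΔ : Δ.PosSemidef) : (idTensor m Φ Δ).PosSemidef := by
  let e : Fin (Fintype.card m) ≃ m := (Fintype.equivFin m).symm
  have h : ((idTensor m Φ Δ).submatrix (Prod.map e id) (Prod.map e id)).PosSemidef := by
    rw [← idTensor_submatrix]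
    exact hΦ _ _ _ (hΔ.submatrix _)
  exact (posSemidef_submatrix_equiv (e.prodCongr (Equiv.refl n))).mp h

theorem add (hΦ : IsCompletelyPositive Φ) (hΘ : IsCompletelyPositive Θ) :
    IsCompletelyPositive (Φ + Θ) := fun m _ Δ hΔ => by
  rw [idTensor_add]
  exact (hΦ m _ Δ hΔ).add (hΘ m _ Δ hΔ)

theorem smul (hΦ : IsCompletelyPositive Φ) {c : ℂ} (hc : 0 ≤ c) :
    IsCompletelyPositive (c • Φ) := fun m _ Δ hΔ => by
  rw [idTensor_smul]
  exact (hΦ m _ Δ hΔ).smul hc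

theorem one_add_smul_sub_of_decomposition (hΓ : IsCompletelyPositive Γ)
    (hΦ : IsCompletelyPositive Φ) {r R : ℝ} (hr : 0 ≤ r) (hrR : r ≤ R)
    (hΛ : Λ = ((1 + r : ℝ) : ℂ) • Γ - (r : ℂ) • Φ) :
    IsCompletelyPositive (((1 + R : ℝ) : ℂ) • Γ - Λ) := by
  have hsplit : ((1 + R : ℝ) : ℂ) • Γ - Λ = ((R - r : ℝ) : ℂ) • Γ + (r : ℂ) • Φ := by
    rw [hΛ]
    push_cast
    module
  rw [hsplit]
  exact (hΓ.smul (Complex.zero_le_real.mpr (sub_nonneg.mpr hrR))).add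
    (hΦ.smul (Complex.zero_le_real.mpr hr))

theorem re_trace_idTensor_mul_nonneg (hΦ : IsCompletelyPositive Φ)
    {Ψ M : Matrix (m × n) (m × n) ℂ} (hΨ : Ψ.PosSemidef) (hM : M.PosSemidef) :
    0 ≤ ((idTensor m Φ Ψ * M).trace).re :=
  (Complex.nonneg_iff.mp
    (trace_mul_nonneg_of_posSemidef (hΦ.posSemidef_idTensor hΨ) hM)).1

theorem re_trace_idTensor_mul_le {c : ℝ} (h : IsCompletelyPositive ((c : ℂ) • Γ - Λ))
    {Ψ M : Matrix (m × n) (m × n) ℂ} (hΨ : Ψ.PosSemidef) (hM : M.PosSemidef) :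
    ((idTensor m Λ Ψ * M).trace).re ≤ c * ((idTensor m Γ Ψ * M).trace).re := by
  have hnonneg := h.re_trace_idTensor_mul_nonneg hΨ hM
  simpa only [idTensor_sub, idTensor_smul, LinearMap.sub_apply, LinearMap.smul_apply,
    Matrix.sub_mul, Matrix.smul_mul, trace_sub, trace_smul, smul_eq_mul, Complex.sub_re,
    Complex.re_ofReal_mul, sub_nonneg] using hnonneg

end IsCompletelyPositive

end

theorem channel_discrimination_bound_general {ι n m : Type*} [Fintype ι] [Fintype n] [Fintype m]
    {Λ Γ : ι → (Matrix n n ℂ →ₗ[ℂ] Matrix n n ℂ)} {c : ℝ}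
    (hdom : ∀ j, IsCompletelyPositive ((c : ℂ) • Γ j - Λ j))
    {p : ι → ℝ} (hp : ∀ j, 0 ≤ p j)
    {Ψ : Matrix (m × n) (m × n) ℂ} (hΨ : Ψ.PosSemidef)
    {M : ι → Matrix (m × n) (m × n) ℂ} (hM : ∀ j, (M j).PosSemidef) :
    ∑ j, p j * ((idTensor m (Λ j) Ψ * M j).trace).re ≤
      c * ∑ j, p j * ((idTensor m (Γ j) Ψ * M j).trace).re := by
  rw [Finset.mul_sum]
  refine Finset.sum_le_sum fun j _ => ?_
  rw [mul_left_comm]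
  exact mul_le_mul_of_nonneg_left ((hdom j).re_trace_idTensor_mul_le hΨ (hM j)) (hp j)

/-- Upper-bound half of the channel-discrimination interpretation of the robustness of
non-Markovianity: for an ensemble of maps `Λ_j = (1+r_j)Γ_j - r_jΦ_j` with `Γ_j, Φ_j`
completely positive and trace-preserving, the success probability of discriminating the
`Λ_j` is at most `(1 + max_j r_j)` times that of the Markovian ensemble `Γ_j`. -/
theorem channel_discrimination_bound {n m : Type*} [Fintype n] [DecidableEq n]
    [Fintype m] [DecidableEq m] (N : ℕ) (hN : 1 ≤ N)
    (Λ Γ Φ : Fin N → (Matrix n n ℂ →ₗ[ℂ] Matrix n n ℂ)) (r : Fin N → ℝ)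
    (hr : ∀ j, 0 ≤ r j)
    (hΓCP : ∀ j, IsCompletelyPositive (Γ j)) (hΓTP : ∀ j, IsTracePreserving (Γ j))
    (hΦCP : ∀ j, IsCompletelyPositive (Φ j)) (hΦTP : ∀ j, IsTracePreserving (Φ j))
    (hdec : ∀ j, Λ j = (((1 + r j : ℝ) : ℂ)) • Γ j - ((r j : ℝ) : ℂ) • Φ j)
    (p : Fin N → ℝ) (hp : ∀ j, 0 ≤ p j)
    (Ψ : Matrix (m × n) (m × n) ℂ) (hΨ : IsDensityMatrix Ψ)
    (M : Fin (N + 1) → Matrix (m × n) (m × n) ℂ) (hMpos : ∀ j, (M j).PosSemidef)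
    (hMsum : ∑ j, M j = 1) :
    ∑ j : Fin N, p j * ((idTensor m (Λ j) Ψ * M j.castSucc).trace).re ≤
      (1 + Finset.univ.sup' (Finset.univ_nonempty_iff.mpr
          (Fin.pos_iff_nonempty.mp hN)) r) *
        ∑ j : Fin N, p j * ((idTensor m (Γ j) Ψ * M j.castSucc).trace).re :=
  channel_discrimination_bound_general (fun j => (hΓCP j).one_add_smul_sub_of_decomposition
    (hΦCP j) (hr j) (Finset.le_sup' r (Finset.mem_univ j)) (hdec j)) hp hΨ.1 (hMpos ·.castSucc)
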